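/- The generalized Lévy operator L is positive on smooth compactly supported functions: for every real-valued f ∈ C_c^∞(ℝ^d), ∫_{ℝ^d} f(x) Lf(x) dx ≥ 0. -/

import Mathlib

open scoped BigOperators
open MeasureTheory

noncomputable section

/-- The compensated integrand `f(x+y) − f(x) − Σ_{i=1}^{2l} (1/i!) Dⁱf(x)[y,…,y]`. -/
def levyIntegrand {d : ℕ} (l : ℕ) (f : EuclideanSpace ℝ (Fin d) → ℝ)
    (x y : EuclideanSpace ℝ (Fin d)) : ℝ :=
  f (x + y) - f x - ∑ i ∈ Finset.Icc 1 (2 * l),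
    (1 / (i.factorial : ℝ)) * iteratedFDeriv ℝ i f x (fun _ => y)

/-- The density `h(y)|y|^{−(2l+1+α)}` of the Lévy measure. -/
def levyWeight {d : ℕ} (l : ℕ) (α : ℝ) (h : EuclideanSpace ℝ (Fin d) → ℝ)
    (y : EuclideanSpace ℝ (Fin d)) : ℝ :=
  h y * ‖y‖ ^ (-(2 * (l : ℝ) + 1 + α))

/-- The generalized Lévy operator
`Lf(x) = (−1)^{l+1} ∫ (f(x+y) − f(x) − Σ_{i=1}^{2l} (1/i!) Dⁱf(x)[y,…,y]) h(y)|y|^{−(2l+1+α)} dy`. -/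
def levyOp {d : ℕ} (l : ℕ) (α : ℝ) (h : EuclideanSpace ℝ (Fin d) → ℝ)
    (f : EuclideanSpace ℝ (Fin d) → ℝ) (x : EuclideanSpace ℝ (Fin d)) : ℝ :=
  (-1 : ℝ) ^ (l + 1) * ∫ y, levyIntegrand l f x y * levyWeight l α h y

/-!
By Fubini it suffices to show `(-1)^l ∫ f(x) r(x, y) dx ≤ 0` for each fixed `y`, where `r(x, y)` is
the Taylor remainder of `f` to order `2l`. For `l ≥ 1`, the integral form of the remainder makes
this integral an average, with nonnegative weight over `t ∈ [0, 1]`, of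
`∫ f(x) (D^{2l}f(x + ty) - D^{2l}f(x)) dx`, all derivatives being taken in the direction `y`.
Integrating by parts `l` times turns the latter into `(-1)^l` times the autocorrelation of `D^l f`
at `ty` minus its value at `0`, where an autocorrelation is maximal.
-/

section IteratedDirDeriv

variable {E F : Type*} [NormedAddCommGroup E] [NormedSpace ℝ E] [NormedAddCommGroup F]
  [NormedSpace ℝ F] {f : E → F} {i m : ℕ}

/-- The `i`-th derivative `Dⁱf(x)[y,…,y]` of `f` at `x` in the direction `y`, with `x` as the last
argument because it is the variable of integration and of further differentiation. -/
def iteratedDirDeriv (i : ℕ) (y : E) (f : E → F) (x : E) : F :=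
  iteratedFDeriv ℝ i f x fun _ => y

theorem iteratedDirDeriv_zero (y : E) (f : E → F) : iteratedDirDeriv 0 y f = f := by
  ext x
  simp [iteratedDirDeriv]

theorem iteratedDirDeriv_comp_add_right (i : ℕ) (y : E) (f : E → F) (v x : E) :
    iteratedDirDeriv i y (fun z => f (z + v)) x = iteratedDirDeriv i y f (x + v) := by
  rw [iteratedDirDeriv, iteratedFDeriv_comp_add_right, iteratedDirDeriv]

theorem contDiff_iteratedDirDeriv (hf : ContDiff ℝ (m + i : ℕ) f) (y : E) :
    ContDiff ℝ m (iteratedDirDeriv i y f) :=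
  (ContinuousMultilinearMap.apply ℝ (fun _ : Fin i => E) F fun _ => y).contDiff.comp
    (hf.iteratedFDeriv_right (by exact_mod_cast le_rfl))

theorem continuous_iteratedDirDeriv (hf : ContDiff ℝ i f) (y : E) :
    Continuous (iteratedDirDeriv i y f) :=
  (hf.continuous_iteratedFDeriv le_rfl).eval_const _

theorem continuous_uncurry_iteratedDirDeriv (hf : ContDiff ℝ i f) :
    Continuous fun p : E × E => iteratedDirDeriv i p.2 f p.1 :=
  ((hf.continuous_iteratedFDeriv le_rfl).comp continuous_fst).eval (by fun_prop)

theorem hasCompactSupport_iteratedDirDeriv (hs : HasCompactSupport f) (i : ℕ) (y : E) :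
    HasCompactSupport (iteratedDirDeriv i y f) :=
  (hs.iteratedFDeriv (𝕜 := ℝ) i).comp_left
    (g := fun D : ContinuousMultilinearMap ℝ (fun _ : Fin i => E) F => D fun _ => y) rfl

theorem differentiable_iteratedDirDeriv (hf : ContDiff ℝ (i + 1 : ℕ) f) (y : E) :
    Differentiable ℝ (iteratedDirDeriv i y f) :=
  (contDiff_iteratedDirDeriv (m := 1) (by rwa [add_comm]) y).differentiable one_ne_zero

theorem fderiv_iteratedDirDeriv_apply (hf : ContDiff ℝ (i + 1 : ℕ) f) (y x : E) :
    fderiv ℝ (iteratedDirDeriv i y f) x y = iteratedDirDeriv (i + 1) y f x :=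
  ((hf.differentiable_iteratedFDeriv (by exact_mod_cast i.lt_succ_self)
    x).iteratedFDeriv_succ_apply_left' (m := fun _ => y)).symm

theorem exists_norm_iteratedDirDeriv_le (hf : ContDiff ℝ i f) (hs : HasCompactSupport f) :
    ∃ C, ∀ y x, ‖iteratedDirDeriv i y f x‖ ≤ C * ‖y‖ ^ i := by
  obtain ⟨C, hC⟩ := (hf.continuous_iteratedFDeriv le_rfl).bounded_above_of_compact_support
    (hs.iteratedFDeriv i)
  refine ⟨C, fun y x => ?_⟩
  calc ‖iteratedDirDeriv i y f x‖
      ≤ ‖iteratedFDeriv ℝ i f x‖ * ‖y‖ ^ i := by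
        simpa [iteratedDirDeriv] using (iteratedFDeriv ℝ i f x).le_opNorm fun _ => y
    _ ≤ C * ‖y‖ ^ i := by gcongr; exact hC x

end IteratedDirDeriv

section TaylorRemainder

open scoped Nat

variable {E F : Type*} [NormedAddCommGroup E] [NormedSpace ℝ E] [NormedAddCommGroup F]
  [NormedSpace ℝ F] {f : E → F} {n : ℕ}

/-- The remainder `f(x+y) − Σ_{i=0}^{n} (1/i!) Dⁱf(x)[y,…,y]` of the Taylor expansion of `f` at `x`
to order `n`, inclusive. -/
def taylorRemainder (n : ℕ) (f : E → F) (x y : E) : F :=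
  f (x + y) - ∑ i ∈ Finset.range (n + 1), (i ! : ℝ)⁻¹ • iteratedDirDeriv i y f x

theorem taylorRemainder_zero (f : E → F) (x y : E) : taylorRemainder 0 f x y = f (x + y) - f x := by
  simp [taylorRemainder, iteratedDirDeriv_zero]

theorem continuous_uncurry_taylorRemainder (hf : ContDiff ℝ n f) :
    Continuous fun p : E × E => taylorRemainder n f p.1 p.2 :=
  (hf.continuous.comp continuous_add).sub <| continuous_finsetSum _ fun _ hi =>
    continuous_const.smul <| continuous_uncurry_iteratedDirDeriv <|
      hf.of_le (by exact_mod_cast Finset.mem_range_succ_iff.1 hi)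

theorem taylorRemainder_eq_integral [CompleteSpace F] (hf : ContDiff ℝ (n + 1 : ℕ) f)
    (x y : E) :
    taylorRemainder n f x y =
      (n ! : ℝ)⁻¹ • ∫ t in (0 : ℝ)..1, (1 - t) ^ n • iteratedDirDeriv (n + 1) y f (x + t • y) := by
  rw [taylorRemainder, sub_eq_iff_eq_add']
  exact map_add_eq_sum_add_integral_iteratedFDeriv fun t _ => hf.contDiffAt

theorem integral_one_sub_pow (n : ℕ) : ∫ t in (0 : ℝ)..1, (1 - t) ^ n = ((n : ℝ) + 1)⁻¹ := by
  simp [intervalIntegral.integral_comp_sub_left (fun t : ℝ => t ^ n)]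

theorem continuous_one_sub_pow_smul_iteratedDirDeriv (hf : ContDiff ℝ n f) (k : ℕ) (x y : E) :
    Continuous fun t : ℝ => (1 - t) ^ k • iteratedDirDeriv n y f (x + t • y) :=
  (by fun_prop : Continuous fun t : ℝ => (1 - t) ^ k).smul
    ((continuous_iteratedDirDeriv hf y).comp (by fun_prop))

/- In this form a remainder of order `2l` involves derivatives of the even order `2l` only, half of
which can be moved to another factor by parts. -/
theorem taylorRemainder_succ_eq_integral [CompleteSpace F] (hf : ContDiff ℝ (n + 1 : ℕ) f)
    (x y : E) :
    taylorRemainder (n + 1) f x y = (n ! : ℝ)⁻¹ • ∫ t in (0 : ℝ)..1, (1 - t) ^ n •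
      (iteratedDirDeriv (n + 1) y f (x + t • y) - iteratedDirDeriv (n + 1) y f x) := by
  have hsucc : taylorRemainder (n + 1) f x y =
      taylorRemainder n f x y - ((n + 1)! : ℝ)⁻¹ • iteratedDirDeriv (n + 1) y f x := by
    rw [taylorRemainder, Finset.sum_range_succ, ← sub_sub, taylorRemainder]
  simp only [smul_sub]
  rw [intervalIntegral.integral_sub
      ((continuous_one_sub_pow_smul_iteratedDirDeriv hf n x y).intervalIntegrable _ _)
      ((by fun_prop : Continuous fun t : ℝ => (1 - t) ^ n •
        iteratedDirDeriv (n + 1) y f x).intervalIntegrable _ _),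
    intervalIntegral.integral_smul_const, integral_one_sub_pow, smul_sub,
    ← taylorRemainder_eq_integral hf, hsucc, Nat.factorial_succ]
  push_cast
  rw [mul_inv, smul_smul, mul_comm ((n : ℝ) + 1)⁻¹]

theorem exists_norm_taylorRemainder_le [CompleteSpace F] (hf : ContDiff ℝ (n + 1 : ℕ) f)
    (hs : HasCompactSupport f) :
    ∃ C, ∀ x y, ‖taylorRemainder n f x y‖ ≤ C * ‖y‖ ^ (n + 1) := by
  obtain ⟨C, hC⟩ := exists_norm_iteratedDirDeriv_le hf hs
  refine ⟨(n ! : ℝ)⁻¹ * C, fun x y => ?_⟩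
  have hintegrand : ∀ t ∈ Set.uIoc (0 : ℝ) 1,
      ‖(1 - t) ^ n • iteratedDirDeriv (n + 1) y f (x + t • y)‖ ≤ C * ‖y‖ ^ (n + 1) := by
    intro t ht
    rw [Set.uIoc_of_le zero_le_one] at ht
    have hweight : |1 - t| ^ n ≤ 1 :=
      pow_le_one₀ (abs_nonneg _) (abs_le.2 ⟨by linarith [ht.2], by linarith [ht.1]⟩)
    rw [norm_smul, norm_pow]
    exact (mul_le_of_le_one_left (norm_nonneg _) hweight).trans (hC y _)
  rw [taylorRemainder_eq_integral hf, norm_smul, Real.norm_of_nonneg (by positivity), mul_assoc]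
  gcongr
  simpa using intervalIntegral.norm_integral_le_of_norm_le_const hintegrand

end TaylorRemainder

section Autocorrelation

theorem integral_mul_comp_add_right_le {G : Type*} [AddGroup G] [MeasurableSpace G]
    [MeasurableAdd G] {μ : Measure G} [μ.IsAddRightInvariant] {g : G → ℝ} (hg : MemLp g 2 μ)
    (v : G) : ∫ x, g x * g (x + v) ∂μ ≤ ∫ x, g x * g x ∂μ := by
  have hgv : MemLp (fun x => g (x + v)) 2 μ :=
    hg.comp_measurePreserving (measurePreserving_add_right μ v)
  have hsq : Integrable (fun x => g x * g x) μ := hg.integrable_mul hg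
  have hsqv : Integrable (fun x => g (x + v) * g (x + v)) μ := hgv.integrable_mul hgv
  calc ∫ x, g x * g (x + v) ∂μ
      ≤ ∫ x, (g x * g x + g (x + v) * g (x + v)) / 2 ∂μ :=
        integral_mono (hg.integrable_mul hgv) ((hsq.add hsqv).div_const 2) fun x => by
          linarith [two_mul_le_add_sq (g x) (g (x + v))]
    _ = ∫ x, g x * g x ∂μ := by
        rw [integral_div, integral_add hsq hsqv,
          integral_add_right_eq_self (fun x => g x * g x) v, add_self_div_two]

variable {E : Type*} [NormedAddCommGroup E] [NormedSpace ℝ E] [FiniteDimensional ℝ E]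
  [MeasurableSpace E] [BorelSpace E] {μ : Measure E} [μ.IsAddHaarMeasure] {f g : E → ℝ}

theorem integral_mul_iteratedDirDeriv_succ {i j : ℕ} (hf : ContDiff ℝ (i + 1 : ℕ) f)
    (hs : HasCompactSupport f) (hg : ContDiff ℝ (j + 1 : ℕ) g) (y : E) :
    ∫ x, iteratedDirDeriv i y f x * iteratedDirDeriv (j + 1) y g x ∂μ =
      -∫ x, iteratedDirDeriv (i + 1) y f x * iteratedDirDeriv j y g x ∂μ := by
  have hint : ∀ a ≤ i + 1, ∀ b ≤ j + 1,
      Integrable (fun x => iteratedDirDeriv a y f x * iteratedDirDeriv b y g x) μ :=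
    fun a ha b hb => Continuous.integrable_of_hasCompactSupport
      ((continuous_iteratedDirDeriv (hf.of_le (by exact_mod_cast ha)) y).mul
        (continuous_iteratedDirDeriv (hg.of_le (by exact_mod_cast hb)) y))
      (hasCompactSupport_iteratedDirDeriv hs a y).mul_right
  simp only [← fderiv_iteratedDirDeriv_apply hf, ← fderiv_iteratedDirDeriv_apply hg]
  apply integral_mul_fderiv_eq_neg_fderiv_mul_of_integrable
  · simpa only [fderiv_iteratedDirDeriv_apply hf] using hint (i + 1) le_rfl j j.le_succ
  · simpa only [fderiv_iteratedDirDeriv_apply hg] using hint i i.le_succ (j + 1) le_rfl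
  · exact hint i i.le_succ j j.le_succ
  · exact fun x _ => differentiable_iteratedDirDeriv hf y x
  · exact fun x _ => differentiable_iteratedDirDeriv hg y x

theorem integral_mul_iteratedDirDeriv_add {i j k : ℕ} (hf : ContDiff ℝ (i + k : ℕ) f)
    (hs : HasCompactSupport f) (hg : ContDiff ℝ (j + k : ℕ) g) (y : E) :
    ∫ x, iteratedDirDeriv i y f x * iteratedDirDeriv (j + k) y g x ∂μ =
      (-1) ^ k * ∫ x, iteratedDirDeriv (i + k) y f x * iteratedDirDeriv j y g x ∂μ := by
  induction k generalizing i with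
  | zero => simp
  | succ k ih =>
    have hf' : ContDiff ℝ (i + 1 + k : ℕ) f := by rwa [add_right_comm, add_assoc]
    rw [← add_assoc j, integral_mul_iteratedDirDeriv_succ (j := j + k)
        (hf.of_le (by exact_mod_cast (by lia : i + 1 ≤ i + (k + 1)))) hs hg,
      ih hf' (hg.of_le (by exact_mod_cast (j + k).le_succ)), add_right_comm i, add_assoc i]
    ring

theorem neg_one_pow_mul_integral_mul_iteratedDirDeriv_sub_nonpos {l : ℕ}
    (hf : ContDiff ℝ (2 * l : ℕ) f) (hs : HasCompactSupport f) (y v : E) :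
    (-1) ^ l * ∫ x, f x *
      (iteratedDirDeriv (2 * l) y f (x + v) - iteratedDirDeriv (2 * l) y f x) ∂μ ≤ 0 := by
  rw [two_mul] at hf ⊢
  have hcont := continuous_iteratedDirDeriv hf y
  have hparts (w : E) : ∫ x, f x * iteratedDirDeriv (l + l) y f (x + w) ∂μ =
      (-1) ^ l * ∫ x, iteratedDirDeriv l y f x * iteratedDirDeriv l y f (x + w) ∂μ := by
    simpa only [iteratedDirDeriv_zero, iteratedDirDeriv_comp_add_right, zero_add] using
      integral_mul_iteratedDirDeriv_add (i := 0) (μ := μ) (g := fun z => f (z + w))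
        (hf.of_le (by exact_mod_cast (by lia : 0 + l ≤ l + l))) hs
        (hf.comp (contDiff_id.add contDiff_const)) y
  have hint (w : E) : Integrable (fun x => f x * iteratedDirDeriv (l + l) y f (x + w)) μ :=
    (hf.continuous.mul (hcont.comp (continuous_add_const w))).integrable_of_hasCompactSupport
      hs.mul_right
  have hmem : MemLp (iteratedDirDeriv l y f) 2 μ :=
    (continuous_iteratedDirDeriv (hf.of_le (by exact_mod_cast l.le_add_left l))
      y).memLp_of_hasCompactSupport (hasCompactSupport_iteratedDirDeriv hs l y)
  have hsub := integral_sub (hint v) (hint 0)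
  simp only [hparts, ← mul_sub] at hsub
  simp only [add_zero] at hsub
  rw [hsub, ← mul_assoc, ← mul_pow, neg_one_mul, neg_neg, one_pow, one_mul]
  exact sub_nonpos.2 (integral_mul_comp_add_right_le hmem v)

end Autocorrelation

section Positivity

open scoped Nat

variable {E : Type*} [NormedAddCommGroup E] [NormedSpace ℝ E] [FiniteDimensional ℝ E]
  [MeasurableSpace E] [BorelSpace E] {μ : Measure E} {f : E → ℝ}

theorem integrable_one_sub_pow_mul_iteratedDirDeriv_sub [IsFiniteMeasureOnCompacts μ] {n i : ℕ}
    (hf : ContDiff ℝ i f) (hs : HasCompactSupport f) (y : E) :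
    Integrable (fun p : ℝ × E => (1 - p.1) ^ n *
      (f p.2 * (iteratedDirDeriv i y f (p.2 + p.1 • y) - iteratedDirDeriv i y f p.2)))
      ((volume.restrict (Set.uIoc 0 1)).prod μ) := by
  obtain ⟨C, hC⟩ := exists_norm_iteratedDirDeriv_le hf hs
  have hcont := continuous_iteratedDirDeriv hf y
  have hfc := hf.continuous
  have hweight : Integrable (fun t : ℝ => (1 - t) ^ n) (volume.restrict (Set.uIoc 0 1)) :=
    intervalIntegrable_iff.1 (Continuous.intervalIntegrable (by fun_prop) 0 1)
  have hfint : Integrable (fun x => ‖f x‖ * (C * ‖y‖ ^ i + C * ‖y‖ ^ i)) μ :=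
    (hfc.integrable_of_hasCompactSupport hs).norm.mul_const _
  refine (hweight.norm.mul_prod hfint).mono' (by fun_prop) <| .of_forall fun p => ?_
  rw [norm_mul, norm_mul]
  gcongr
  exact (norm_sub_le _ _).trans (add_le_add (hC y _) (hC y _))

theorem integral_mul_taylorRemainder_succ [IsFiniteMeasureOnCompacts μ] {n : ℕ}
    (hf : ContDiff ℝ (n + 1 : ℕ) f) (hs : HasCompactSupport f) (y : E) :
    ∫ x, f x * taylorRemainder (n + 1) f x y ∂μ =
      (n ! : ℝ)⁻¹ * ∫ t in (0 : ℝ)..1, (1 - t) ^ n * ∫ x, f x *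
        (iteratedDirDeriv (n + 1) y f (x + t • y) - iteratedDirDeriv (n + 1) y f x) ∂μ := by
  simp only [taylorRemainder_succ_eq_integral hf, smul_eq_mul, mul_left_comm (f _)]
  rw [integral_const_mul]
  congr 1
  simp only [← integral_const_mul, ← intervalIntegral.integral_const_mul, mul_left_comm (f _)]
  exact (intervalIntegral_integral_swap (f := fun t x => (1 - t) ^ n * (f x *
    (iteratedDirDeriv (n + 1) y f (x + t • y) - iteratedDirDeriv (n + 1) y f x)))
    (integrable_one_sub_pow_mul_iteratedDirDeriv_sub hf hs y)).symm

theorem neg_one_pow_mul_integral_mul_taylorRemainder_nonneg [μ.IsAddHaarMeasure] {l : ℕ}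
    (hf : ContDiff ℝ (2 * l : ℕ) f) (hs : HasCompactSupport f) (y : E) :
    0 ≤ (-1) ^ (l + 1) * ∫ x, f x * taylorRemainder (2 * l) f x y ∂μ := by
  have hdiff (v : E) := neg_one_pow_mul_integral_mul_iteratedDirDeriv_sub_nonpos (μ := μ) hf hs y v
  rw [pow_succ', mul_assoc, neg_one_mul, neg_nonneg]
  rcases l with _ | l
  · simpa only [taylorRemainder_zero, mul_zero, iteratedDirDeriv_zero] using hdiff y
  · rw [show 2 * (l + 1) = 2 * l + 1 + 1 by ring] at hf hdiff ⊢
    rw [integral_mul_taylorRemainder_succ hf hs, mul_left_comm,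
      ← intervalIntegral.integral_const_mul]
    refine mul_nonpos_of_nonneg_of_nonpos (by positivity) ?_
    rw [← neg_nonneg, ← intervalIntegral.integral_neg]
    refine intervalIntegral.integral_nonneg zero_le_one fun t ht => ?_
    rw [mul_left_comm, ← mul_neg]
    exact mul_nonneg (pow_nonneg (sub_nonneg.2 ht.2) _) (neg_nonneg.2 (hdiff (t • y)))

/-- The generalized Lévy operator of order `l` with an arbitrary Lévy measure `ν` in place of
`h(y)|y|^{−(2l+1+α)} dy`; its compensated integrand is the Taylor remainder to order `2l`. -/
def levyMeasureOp (ν : Measure E) (l : ℕ) (f : E → ℝ) (x : E) : ℝ :=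
  (-1) ^ (l + 1) * ∫ y, taylorRemainder (2 * l) f x y ∂ν

theorem integrable_mul_taylorRemainder [IsFiniteMeasureOnCompacts μ] {ν : Measure E} {n : ℕ}
    (hν : Integrable (fun y => ‖y‖ ^ (n + 1)) ν)
    (hf : ContDiff ℝ (n + 1 : ℕ) f) (hs : HasCompactSupport f) :
    Integrable (fun p : E × E => f p.1 * taylorRemainder n f p.1 p.2) (μ.prod ν) := by
  obtain ⟨C, hC⟩ := exists_norm_taylorRemainder_le hf hs
  have hfint : Integrable f μ := hf.continuous.integrable_of_hasCompactSupport hs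
  have hcont : Continuous fun p : E × E => f p.1 * taylorRemainder n f p.1 p.2 :=
    (hf.continuous.comp continuous_fst).mul
      (continuous_uncurry_taylorRemainder (hf.of_le (by exact_mod_cast n.le_succ)))
  refine (hfint.norm.mul_prod (hν.const_mul C)).mono' hcont.aestronglyMeasurable <| .of_forall ?_
  intro p
  rw [norm_mul]
  exact mul_le_mul_of_nonneg_left (hC p.1 p.2) (norm_nonneg _)

theorem levyOp_positive_general [μ.IsAddHaarMeasure] {ν : Measure E} [SFinite ν] {l : ℕ}
    (hν : Integrable (fun y => ‖y‖ ^ (2 * l + 1)) ν)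
    (hf : ContDiff ℝ (2 * l + 1 : ℕ) f) (hs : HasCompactSupport f) :
    0 ≤ ∫ x, f x * levyMeasureOp ν l f x ∂μ := by
  have hfubini : ∫ x, f x * levyMeasureOp ν l f x ∂μ =
      ∫ y, (-1) ^ (l + 1) * ∫ x, f x * taylorRemainder (2 * l) f x y ∂μ ∂ν := by
    simp only [levyMeasureOp, mul_left_comm (f _)]
    rw [integral_const_mul, integral_const_mul]
    simp only [← integral_const_mul (f _)]
    rw [integral_integral_swap (f := fun x y => f x * taylorRemainder (2 * l) f x y)
      (integrable_mul_taylorRemainder hν hf hs)]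
  rw [hfubini]
  exact integral_nonneg fun y => neg_one_pow_mul_integral_mul_taylorRemainder_nonneg
    (hf.of_le (by exact_mod_cast (2 * l).le_succ)) hs y

end Positivity

section LevyMeasure

variable {d l : ℕ} {α : ℝ} {h : EuclideanSpace ℝ (Fin d) → ℝ}

/-- The Lévy measure `ν(dy) = h(y)|y|^{−(2l+1+α)} dy`. -/
def levyMeasure (l : ℕ) (α : ℝ) (h : EuclideanSpace ℝ (Fin d) → ℝ) :
    Measure (EuclideanSpace ℝ (Fin d)) :=
  volume.withDensity fun y => ENNReal.ofReal (levyWeight l α h y)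

instance : SFinite (levyMeasure l α h) :=
  inferInstanceAs (SFinite (volume.withDensity _))

theorem measurable_levyWeight (hmeas : Measurable h) : Measurable (levyWeight l α h) :=
  hmeas.mul (measurable_norm.pow_const _)

theorem levyWeight_nonneg (hpos : ∀ y, 0 ≤ h y) (y : EuclideanSpace ℝ (Fin d)) :
    0 ≤ levyWeight l α h y :=
  mul_nonneg (hpos y) (by positivity)

theorem levyIntegrand_eq_taylorRemainder (f : EuclideanSpace ℝ (Fin d) → ℝ)
    (x y : EuclideanSpace ℝ (Fin d)) :
    levyIntegrand l f x y = taylorRemainder (2 * l) f x y := by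
  rw [taylorRemainder, Finset.range_eq_Ico, Finset.sum_eq_sum_Ico_succ_bot (by lia), ← sub_sub]
  simp only [iteratedDirDeriv_zero, Nat.factorial_zero, Nat.cast_one, inv_one, one_smul]
  simp only [levyIntegrand, one_div]
  rfl

theorem levyOp_eq_levyMeasureOp (hmeas : Measurable h) (hpos : ∀ y, 0 ≤ h y)
    (f : EuclideanSpace ℝ (Fin d) → ℝ) :
    levyOp l α h f = levyMeasureOp (levyMeasure l α h) l f := by
  ext x
  rw [levyOp, levyMeasureOp, levyMeasure, integral_withDensity_eq_integral_toReal_smul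
    (measurable_levyWeight hmeas).ennreal_ofReal (.of_forall fun _ => ENNReal.ofReal_lt_top)]
  simp only [ENNReal.toReal_ofReal (levyWeight_nonneg hpos _), smul_eq_mul, mul_comm,
    levyIntegrand_eq_taylorRemainder]

theorem norm_pow_mul_levyWeight_le {M R : ℝ} (hα : α ≤ 0) (hpos : ∀ y, 0 ≤ h y)
    (hbd : ∀ y, h y ≤ M) {y : EuclideanSpace ℝ (Fin d)} (hy : ‖y‖ ≤ R) :
    ‖y‖ ^ (2 * l + 1) * levyWeight l α h y ≤ M * R ^ (-α) := by
  have hpow : ‖y‖ ^ (2 * l + 1) * ‖y‖ ^ (-(2 * (l : ℝ) + 1 + α)) ≤ ‖y‖ ^ (-α) := by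
    rcases (norm_nonneg y).eq_or_lt with hy0 | hy0
    · rw [← hy0, zero_pow (by lia), zero_mul]
      positivity
    · rw [← Real.rpow_natCast, ← Real.rpow_add hy0]
      exact (congrArg _ (by push_cast; ring)).le
  calc ‖y‖ ^ (2 * l + 1) * levyWeight l α h y
      = h y * (‖y‖ ^ (2 * l + 1) * ‖y‖ ^ (-(2 * (l : ℝ) + 1 + α))) := mul_left_comm _ _ _
    _ ≤ M * R ^ (-α) := by
        have hM : 0 ≤ M := (hpos y).trans (hbd y)
        gcongr
        · exact hbd y
        · exact hpow.trans (Real.rpow_le_rpow (norm_nonneg y) hy (neg_nonneg.2 hα))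

theorem integrable_norm_pow_levyMeasure {M R : ℝ} (hα : α ≤ 0) (hmeas : Measurable h)
    (hpos : ∀ y, 0 ≤ h y) (hbd : ∀ y, h y ≤ M) (hvan : ∀ y, R < ‖y‖ → h y = 0) :
    Integrable (fun y => ‖y‖ ^ (2 * l + 1)) (levyMeasure l α h) := by
  rw [levyMeasure, integrable_withDensity_iff (measurable_levyWeight hmeas).ennreal_ofReal
    (.of_forall fun _ => ENNReal.ofReal_lt_top)]
  simp only [ENNReal.toReal_ofReal (levyWeight_nonneg hpos _)]
  have hsupp : Function.support (fun y => ‖y‖ ^ (2 * l + 1) * levyWeight l α h y) ⊆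
      Metric.closedBall 0 R := by
    intro y hy
    contrapose! hy
    rw [mem_closedBall_zero_iff, not_le] at hy
    simp [levyWeight, hvan y hy]
  rw [← integrableOn_iff_integrable_of_support_subset hsupp]
  refine Measure.integrableOn_of_bounded (M := M * R ^ (-α)) measure_closedBall_lt_top.ne
    ((measurable_norm.pow_const _).mul (measurable_levyWeight hmeas)).aestronglyMeasurable ?_
  refine (ae_restrict_mem Metric.isClosed_closedBall.measurableSet).mono fun y hy => ?_
  rw [Real.norm_of_nonneg (mul_nonneg (by positivity) (levyWeight_nonneg hpos y))]
  exact norm_pow_mul_levyWeight_le hα hpos hbd (mem_closedBall_zero_iff.1 hy)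

end LevyMeasure

/-- the generalized Lévy operator is positive on `C_c^∞(ℝ^d)`:
`∫ f(x) Lf(x) dx ≥ 0`. -/
theorem levyOp_positive
    (d l : ℕ) (α : ℝ) (hα : α ∈ Set.Ioo (-1 : ℝ) 0)
    (h : EuclideanSpace ℝ (Fin d) → ℝ)
    (hmeas : Measurable h) (hpos : ∀ y, 0 ≤ h y)
    (M : ℝ) (hbd : ∀ y, h y ≤ M)
    (hsymm : ∀ y, h (-y) = h y)
    (R : ℝ) (hR : 0 < R) (hvan : ∀ y : EuclideanSpace ℝ (Fin d), R < ‖y‖ → h y = 0)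
    (f : EuclideanSpace ℝ (Fin d) → ℝ)
    (hf : ContDiff ℝ (⊤ : ℕ∞) f) (hfsupp : HasCompactSupport f) :
    0 ≤ ∫ x, f x * levyOp l α h f x := by
  simp only [levyOp_eq_levyMeasureOp hmeas hpos]
  exact levyOp_positive_general (integrable_norm_pow_levyMeasure hα.2.le hmeas hpos hbd hvan)
    (contDiff_infty.1 hf _) hfsupp
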